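/- Let N ≥ 1 be an integer, let Ω ⊆ ℝ^N be a nonempty bounded open set, let p ∈ (1, +∞), let μ be a nonnegative, nontrivial (i.e. μ ≠ 0), finite Borel measure on (0,1), and let g : ℝ^N → ℝ be measurable. For a measurable function v : ℝ^N → ℝ set E(v) := ∫_Ω |v|^p dx + ∫_{ℝ^N ∖ Ω} |g| · |v|^p dx + (1/2) ∫_{(0,1)} ( c_{N,s,p} ∬_𝒬 |v(x) − v(y)|^p / |x−y|^{N+ps} dx dy ) dμ(s). Suppose {u_n} is a sequence of measurable functions u_n : ℝ^N → ℝ with E(u_n) < +∞ for every n, which is Cauchy for E, i.e. for every ε > 0 there exists K such that E(u_m − u_n) ≤ ε for all m, n ≥ K. Then there exists a measurable function u : ℝ^N → ℝ with E(u) < +∞ such that E(u_n − u) → 0 as n → ∞. -/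

import Mathlib

open MeasureTheory Set Filter
open scoped ENNReal Topology

/-- The normalizing constant `c_{N,s,p}` of the fractional `p`-Laplacian. -/
noncomputable def cNsp (N : ℕ) (s p : ℝ) : ℝ :=
  s * (2 : ℝ) ^ (2 * s - 1) * Real.Gamma ((p * s + p + N - 2) / 2) /
    (Real.pi ^ ((N : ℝ) / 2) * Real.Gamma (1 - s))

/-- The energy `E(v)` built from the `L^p` norm on `Ω`, the weighted `L^p` norm on `ℝ^N ∖ Ω`
and the superposition of Gagliardo seminorms over `𝒬 = ℝ^{2N} ∖ (Ωᶜ × Ωᶜ)`. -/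
noncomputable def energyE (N : ℕ) (Ω : Set (EuclideanSpace ℝ (Fin N))) (p : ℝ)
    (μ : Measure ℝ) (g v : EuclideanSpace ℝ (Fin N) → ℝ) : ℝ≥0∞ :=
  (∫⁻ x in Ω, ENNReal.ofReal (|v x| ^ p)) +
    (∫⁻ x in Ωᶜ, ENNReal.ofReal (|g x| * |v x| ^ p)) +
    (1 / 2) * ∫⁻ s in Set.Ioo (0 : ℝ) 1,
        ENNReal.ofReal (cNsp N s p) *
          ∫⁻ z in ((Ωᶜ) ×ˢ (Ωᶜ))ᶜ,
            ENNReal.ofReal (|v z.1 - v z.2| ^ p / dist z.1 z.2 ^ ((N : ℝ) + p * s))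
            ∂(volume.prod volume) ∂μ

/-! Tonelli's theorem turns the superposition over `s` into a single kernel `k`, so that
`E(v) = ∫ |v|^p dρ + ∬ |v(x) - v(y)|^p dκ` with `ρ` a weighted Lebesgue measure on `ℝ^N` and `κ` the
measure with density `k` on `𝒬`. A Cauchy sequence for `E` therefore has limits in `L^p(ρ)` for `uₙ`
and in `L^p(κ)` for the increments `uₙ(x) - uₙ(y)`, and along a subsequence both converge almost
everywhere. As `k > 0` off the diagonal of `𝒬 ⊇ Ω × ℝ^N`, some point `x ∈ Ω` has `uₙ(x)` convergent
and `uₙ(x) - uₙ(y)` convergent for almost every `y`; hence `uₙ` converges almost everywhere on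
`ℝ^N`, and its limit realises both `L^p` limits. -/

open scoped NNReal

section NonlocalEnergy

variable {X F ι : Type*} [NormedAddCommGroup F]

theorem tendsto_ennreal_rpow_zero_iff {l : Filter ι} {f : ι → ℝ≥0∞} {r : ℝ} (hr : 0 < r) :
    Tendsto (fun i => f i ^ r) l (𝓝 0) ↔ Tendsto f l (𝓝 0) := by
  have h := (ENNReal.orderIsoRpow r hr).toHomeomorph.isInducing.tendsto_nhds_iff
    (f := f) (l := l) (y := 0)
  simpa [Function.comp_def, ENNReal.zero_rpow_of_pos hr] using h.symm

theorem tendsto_ennreal_add_zero_iff {l : Filter ι} {f g : ι → ℝ≥0∞} :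
    Tendsto (fun i => f i + g i) l (𝓝 0) ↔ Tendsto f l (𝓝 0) ∧ Tendsto g l (𝓝 0) := by
  refine ⟨fun h => ⟨?_, ?_⟩, fun h => by simpa only [add_zero] using h.1.add h.2⟩
  · exact tendsto_of_tendsto_of_tendsto_of_le_of_le tendsto_const_nhds h
      (fun _ => zero_le) fun _ => le_self_add
  · exact tendsto_of_tendsto_of_tendsto_of_le_of_le tendsto_const_nhds h
      (fun _ => zero_le) fun _ => le_add_self

/-- The increment `(x, y) ↦ v x - v y` of a function, as a function on pairs. -/
def increment (v : X → F) (z : X × X) : F := v z.1 - v z.2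

theorem increment_sub (v w : X → F) : increment (v - w) = increment v - increment w := by
  ext z
  simp only [increment, Pi.sub_apply]
  abel

variable [MeasurableSpace X]

/-- The energy `∫ ‖v‖^p dρ + ∫ ‖v x - v y‖^p dκ`: a local term with respect to `ρ` and a nonlocal
term with respect to a measure `κ` on pairs, which absorbs the interaction kernel. -/
noncomputable def nonlocalEnergy (p : ℝ≥0) (ρ : Measure X) (κ : Measure (X × X)) (v : X → F) :
    ℝ≥0∞ :=
  ∫⁻ x, ‖v x‖ₑ ^ (p : ℝ) ∂ρ + ∫⁻ z, ‖increment v z‖ₑ ^ (p : ℝ) ∂κ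

theorem aestronglyMeasurable_increment {ν : Measure X} {v : X → F}
    (hv : AEStronglyMeasurable v ν) : AEStronglyMeasurable (increment v) (ν.prod ν) :=
  hv.comp_fst.sub hv.comp_snd

variable {p : ℝ≥0} {ρ : Measure X} {κ : Measure (X × X)}

theorem nonlocalEnergy_eq_eLpNorm (hp : p ≠ 0) (v : X → F) :
    nonlocalEnergy p ρ κ v = eLpNorm v p ρ ^ (p : ℝ) + eLpNorm (increment v) p κ ^ (p : ℝ) := by
  rw [nonlocalEnergy, eLpNorm_nnreal_pow_eq_lintegral hp, eLpNorm_nnreal_pow_eq_lintegral hp]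

theorem nonlocalEnergy_lt_top_iff (hp : p ≠ 0) {v : X → F} :
    nonlocalEnergy p ρ κ v < ⊤ ↔ eLpNorm v p ρ < ⊤ ∧ eLpNorm (increment v) p κ < ⊤ := by
  have hp' : (0 : ℝ) < p := NNReal.coe_pos.2 (pos_iff_ne_zero.2 hp)
  rw [nonlocalEnergy_eq_eLpNorm hp, ENNReal.add_lt_top, ENNReal.rpow_lt_top_iff_of_pos hp',
    ENNReal.rpow_lt_top_iff_of_pos hp']

theorem tendsto_nonlocalEnergy_zero_iff (hp : p ≠ 0) {l : Filter ι} {f : ι → X → F} :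
    Tendsto (fun i => nonlocalEnergy p ρ κ (f i)) l (𝓝 0) ↔
      Tendsto (fun i => eLpNorm (f i) p ρ) l (𝓝 0) ∧
        Tendsto (fun i => eLpNorm (increment (f i)) p κ) l (𝓝 0) := by
  have hp' : (0 : ℝ) < p := NNReal.coe_pos.2 (pos_iff_ne_zero.2 hp)
  simp only [nonlocalEnergy_eq_eLpNorm hp, tendsto_ennreal_add_zero_iff,
    tendsto_ennreal_rpow_zero_iff hp']

end NonlocalEnergy

section Completeness

variable {X Y F : Type*} [MeasurableSpace X] [MeasurableSpace Y] [NormedAddCommGroup F]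

theorem exists_memLp_tendsto_eLpNorm_sub [CompleteSpace F] {p : ℝ≥0∞} (hp : 1 ≤ p)
    {ρ : Measure X} {f : ℕ → X → F} (hf : ∀ n, MemLp (f n) p ρ)
    (hcauchy : Tendsto (fun m : ℕ × ℕ => eLpNorm (f m.1 - f m.2) p ρ) atTop (𝓝 0)) :
    ∃ g, MemLp g p ρ ∧ Tendsto (fun n => eLpNorm (f n - g) p ρ) atTop (𝓝 0) := by
  have : Fact (1 ≤ p) := ⟨hp⟩
  have hcauchyLp : CauchySeq fun n => (hf n).toLp (f n) := by
    refine (Lp.cauchySeq_Lp_iff_cauchySeq_eLpNorm _).2 (hcauchy.congr fun m => ?_)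
    exact eLpNorm_congr_ae ((hf m.1).coeFn_toLp.sub (hf m.2).coeFn_toLp).symm
  obtain ⟨g, hg⟩ := cauchySeq_tendsto_of_complete hcauchyLp
  refine ⟨g, Lp.memLp g, ((Lp.tendsto_Lp_iff_tendsto_eLpNorm' _ _).1 hg).congr fun n => ?_⟩
  exact eLpNorm_congr_ae ((hf n).coeFn_toLp.sub EventuallyEq.rfl)

theorem exists_strictMono_ae_tendsto_of_tendsto_eLpNorm {p : ℝ≥0∞} (hp : p ≠ 0)
    {ρ : Measure X} {κ : Measure Y} {f : ℕ → X → F} {f' : X → F} {h : ℕ → Y → F} {h' : Y → F}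
    (hf : ∀ n, AEStronglyMeasurable (f n) ρ) (hf' : AEStronglyMeasurable f' ρ)
    (hh : ∀ n, AEStronglyMeasurable (h n) κ) (hh' : AEStronglyMeasurable h' κ)
    (hff' : Tendsto (fun n => eLpNorm (f n - f') p ρ) atTop (𝓝 0))
    (hhh' : Tendsto (fun n => eLpNorm (h n - h') p κ) atTop (𝓝 0)) :
    ∃ φ : ℕ → ℕ, StrictMono φ ∧ (∀ᵐ x ∂ρ, Tendsto (fun n => f (φ n) x) atTop (𝓝 (f' x))) ∧
      ∀ᵐ y ∂κ, Tendsto (fun n => h (φ n) y) atTop (𝓝 (h' y)) := by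
  obtain ⟨φ, hφ, hfφ⟩ :=
    (tendstoInMeasure_of_tendsto_eLpNorm hp hf hf' hff').exists_seq_tendsto_ae
  obtain ⟨ψ, hψ, hhψ⟩ := (tendstoInMeasure_of_tendsto_eLpNorm hp (fun n => hh (φ n)) hh'
    (hhh'.comp hφ.tendsto_atTop)).exists_seq_tendsto_ae
  refine ⟨φ ∘ ψ, hφ.comp hψ, ?_, hhψ⟩
  filter_upwards [hfφ] with x hx using hx.comp hψ.tendsto_atTop

theorem ae_exists_tendsto_of_increment {σ ν : Measure X} [NeZero σ] [SFinite ν] {u : ℕ → X → F}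
    (hloc : ∀ᵐ x ∂σ, ∃ l, Tendsto (fun n => u n x) atTop (𝓝 l))
    (hincr : ∀ᵐ z ∂σ.prod ν, ∃ l, Tendsto (fun n => increment (u n) z) atTop (𝓝 l)) :
    ∀ᵐ y ∂ν, ∃ l, Tendsto (fun n => u n y) atTop (𝓝 l) := by
  obtain ⟨x, hx, a, ha⟩ := ((Measure.ae_ae_of_ae_prod hincr).and hloc).exists
  filter_upwards [hx] with y ⟨b, hb⟩
  exact ⟨a - b, (ha.sub hb).congr fun n => sub_sub_cancel _ _⟩

theorem ae_tendsto_increment {ν : Measure X} {κ : Measure (X × X)} (hκ : κ ≪ ν.prod ν)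
    {u : ℕ → X → F} {v : X → F}
    (h : ∀ᵐ x ∂ν, Tendsto (fun n => u n x) atTop (𝓝 (v x))) :
    ∀ᵐ z ∂κ, Tendsto (fun n => increment (u n) z) atTop (𝓝 (increment v z)) := by
  filter_upwards [hκ.ae_le (Measure.quasiMeasurePreserving_fst.ae h),
    hκ.ae_le (Measure.quasiMeasurePreserving_snd.ae h)] with z hz₁ hz₂ using hz₁.sub hz₂

variable {σ ν ρ : Measure X} {κ : Measure (X × X)} [NeZero σ] [SFinite ν]

theorem exists_ae_eq_and_increment_ae_eq (hρ : ρ ≪ ν) (hκ : κ ≪ ν.prod ν) (hσρ : σ ≪ ρ)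
    (hσκ : σ.prod ν ≪ κ) {u : ℕ → X → F} (hu : ∀ n, AEStronglyMeasurable (u n) ν)
    {f : X → F} {h : X × X → F} (hf : ∀ᵐ x ∂ρ, Tendsto (fun n => u n x) atTop (𝓝 (f x)))
    (hh : ∀ᵐ z ∂κ, Tendsto (fun n => increment (u n) z) atTop (𝓝 (h z))) :
    ∃ v, StronglyMeasurable v ∧ v =ᵐ[ρ] f ∧ increment v =ᵐ[κ] h := by
  have hconv : ∀ᵐ x ∂ν, ∃ l, Tendsto (fun n => u n x) atTop (𝓝 l) :=
    ae_exists_tendsto_of_increment (hσρ.ae_le (hf.mono fun x hx => ⟨f x, hx⟩))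
      (hσκ.ae_le (hh.mono fun z hz => ⟨h z, hz⟩))
  obtain ⟨v, hv, huv⟩ := exists_stronglyMeasurable_limit_of_tendsto_ae hu hconv
  refine ⟨v, hv, ?_, ?_⟩
  · filter_upwards [hρ.ae_le huv, hf] with x hx hx' using tendsto_nhds_unique hx hx'
  · filter_upwards [ae_tendsto_increment hκ huv, hh] with z hz hz'
      using tendsto_nhds_unique hz hz'

theorem exists_tendsto_nonlocalEnergy_sub [CompleteSpace F] {p : ℝ≥0} (hp : 1 ≤ p) (hρ : ρ ≪ ν)
    (hκ : κ ≪ ν.prod ν) (hσρ : σ ≪ ρ) (hσκ : σ.prod ν ≪ κ) {u : ℕ → X → F}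
    (hu : ∀ n, AEStronglyMeasurable (u n) ν) (hfin : ∀ n, nonlocalEnergy p ρ κ (u n) < ⊤)
    (hcauchy :
      Tendsto (fun m : ℕ × ℕ => nonlocalEnergy p ρ κ (u m.1 - u m.2)) atTop (𝓝 0)) :
    ∃ v, StronglyMeasurable v ∧ nonlocalEnergy p ρ κ v < ⊤ ∧
      Tendsto (fun n => nonlocalEnergy p ρ κ (u n - v)) atTop (𝓝 0) := by
  have hp₀ : p ≠ 0 := (zero_lt_one.trans_le hp).ne'
  have hp₁ : (1 : ℝ≥0∞) ≤ p := ENNReal.coe_le_coe.2 hp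
  have huρ n : MemLp (u n) p ρ :=
    ⟨(hu n).mono_ac hρ, ((nonlocalEnergy_lt_top_iff hp₀).1 (hfin n)).1⟩
  have huκ n : MemLp (increment (u n)) p κ :=
    ⟨(aestronglyMeasurable_increment (hu n)).mono_ac hκ,
      ((nonlocalEnergy_lt_top_iff hp₀).1 (hfin n)).2⟩
  simp only [tendsto_nonlocalEnergy_zero_iff hp₀, nonlocalEnergy_lt_top_iff hp₀,
    increment_sub] at hcauchy ⊢
  obtain ⟨f, hf, huf⟩ := exists_memLp_tendsto_eLpNorm_sub hp₁ huρ hcauchy.1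
  obtain ⟨h, hh, huh⟩ := exists_memLp_tendsto_eLpNorm_sub hp₁ huκ hcauchy.2
  obtain ⟨φ, -, hfφ, hhφ⟩ := exists_strictMono_ae_tendsto_of_tendsto_eLpNorm
    (ENNReal.coe_ne_zero.2 hp₀) (fun n => (huρ n).1) hf.1 (fun n => (huκ n).1) hh.1 huf huh
  obtain ⟨v, hv, hvf, hvh⟩ :=
    exists_ae_eq_and_increment_ae_eq hρ hκ hσρ hσκ (fun n => hu (φ n)) hfφ hhφ
  refine ⟨v, hv, ⟨?_, ?_⟩, ?_, ?_⟩
  · exact (eLpNorm_congr_ae hvf).trans_lt hf.2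
  · exact (eLpNorm_congr_ae hvh).trans_lt hh.2
  · exact huf.congr fun n => eLpNorm_congr_ae (EventuallyEq.rfl.sub hvf.symm)
  · exact huh.congr fun n => eLpNorm_congr_ae (EventuallyEq.rfl.sub hvh.symm)

end Completeness

section SuperposedKernel

theorem measurable_realGamma : Measurable Real.Gamma := by
  have h : Measurable fun s => (Complex.Gamma s)⁻¹⁻¹ :=
    Complex.differentiable_one_div_Gamma.continuous.measurable.inv
  simp only [inv_inv] at h
  exact Complex.measurable_re.comp (h.comp Complex.measurable_ofReal)

theorem measurable_cNsp (N : ℕ) (p : ℝ) : Measurable fun s => cNsp N s p := by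
  have := measurable_realGamma
  unfold cNsp
  fun_prop

theorem cNsp_pos {N : ℕ} (hN : 1 ≤ N) {s p : ℝ} (hp : 1 ≤ p) (hs : s ∈ Ioo 0 1) :
    0 < cNsp N s p := by
  obtain ⟨hs₀, hs₁⟩ := hs
  have hN' : (1 : ℝ) ≤ N := Nat.one_le_cast.2 hN
  have hps : 0 < p * s := mul_pos (zero_lt_one.trans_le hp) hs₀
  have hΓ := Real.Gamma_pos_of_pos (s := (p * s + p + N - 2) / 2) (by linarith)
  have hΓ' := Real.Gamma_pos_of_pos (s := 1 - s) (by linarith)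
  exact div_pos (mul_pos (mul_pos hs₀ (by positivity)) hΓ) (mul_pos (by positivity) hΓ')

theorem ae_prod_fst_ne_snd {X : Type*} [MeasurableSpace X] [MeasurableEq X] (σ ν : Measure X)
    [SFinite ν] [NullSingletonClass ν] : ∀ᵐ z ∂σ.prod ν, z.1 ≠ z.2 := by
  refine (Measure.ae_prod_iff_ae_ae measurableSet_diagonal.compl).2 (ae_of_all _ fun x => ?_)
  exact (ν.ae_ne x).mono fun y hy => hy.symm

variable (N : ℕ) (p : ℝ) (μ : Measure ℝ)

/-- The factor `c_{N,s,p} / |x - y|^{N+ps}` of `|v x - v y|^p` in the Gagliardo energy of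
order `s`, as a function of `(s, (x, y))`; it takes the junk value `0` on the diagonal `x = y`. -/
noncomputable def gagliardoKernel
    (q : ℝ × (EuclideanSpace ℝ (Fin N) × EuclideanSpace ℝ (Fin N))) : ℝ≥0∞ :=
  ENNReal.ofReal (cNsp N q.1 p) *
    ENNReal.ofReal (dist q.2.1 q.2.2 ^ ((N : ℝ) + p * q.1))⁻¹

/-- The kernel `½ ∫_{(0,1)} c_{N,s,p} / |x - y|^{N+ps} dμ(s)` on pairs `(x, y)`, by which the
superposition of fractional energies becomes one nonlocal energy. -/
noncomputable def superposedKernel (z : EuclideanSpace ℝ (Fin N) × EuclideanSpace ℝ (Fin N)) :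
    ℝ≥0∞ :=
  (1 / 2) * ∫⁻ s in Ioo 0 1, gagliardoKernel N p (s, z) ∂μ

theorem measurable_gagliardoKernel : Measurable (gagliardoKernel N p) := by
  have := measurable_cNsp N p
  unfold gagliardoKernel
  fun_prop

theorem measurable_superposedKernel [SFinite μ] : Measurable (superposedKernel N p μ) :=
  (measurable_gagliardoKernel N p).lintegral_prod_left'.const_mul _

variable {N p μ}

theorem gagliardoKernel_ne_zero (hN : 1 ≤ N) (hp : 1 ≤ p) {s : ℝ} (hs : s ∈ Ioo 0 1)
    {x y : EuclideanSpace ℝ (Fin N)} (hxy : x ≠ y) : gagliardoKernel N p (s, (x, y)) ≠ 0 := by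
  have hc := cNsp_pos hN hp hs
  have hd : 0 < dist x y := dist_pos.2 hxy
  exact mul_ne_zero (ENNReal.ofReal_pos.2 hc).ne' (ENNReal.ofReal_pos.2 (by positivity)).ne'

theorem superposedKernel_ne_zero (hN : 1 ≤ N) (hp : 1 ≤ p) (hμ : μ (Ioo 0 1) ≠ 0)
    {z : EuclideanSpace ℝ (Fin N) × EuclideanSpace ℝ (Fin N)} (hz : z.1 ≠ z.2) :
    superposedKernel N p μ z ≠ 0 := by
  have hmeas : Measurable fun s => gagliardoKernel N p (s, z) :=
    (measurable_gagliardoKernel N p).comp measurable_prodMk_right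
  have hsub : Ioo 0 1 ⊆ Function.support (fun s => gagliardoKernel N p (s, z)) ∩ Ioo 0 1 :=
    fun s hs => ⟨gagliardoKernel_ne_zero hN hp hs hz, hs⟩
  have hpos : 0 < ∫⁻ s in Ioo 0 1, gagliardoKernel N p (s, z) ∂μ :=
    (setLIntegral_pos_iff hmeas).2 ((pos_iff_ne_zero.2 hμ).trans_le (measure_mono hsub))
  exact mul_ne_zero (by norm_num) hpos.ne'

end SuperposedKernel

section EnergyMeasures

variable (N : ℕ) (Ω : Set (EuclideanSpace ℝ (Fin N)))

/-- The measure `ρ` of the local terms of the energy: Lebesgue measure on `Ω`, and Lebesgue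
measure with density `|g|` on `ℝ^N ∖ Ω`. -/
noncomputable def localMeasure (g : EuclideanSpace ℝ (Fin N) → ℝ) :
    Measure (EuclideanSpace ℝ (Fin N)) :=
  volume.restrict Ω + (volume.restrict Ωᶜ).withDensity fun x => ‖g x‖ₑ

/-- The measure `κ` on pairs of the nonlocal term of the energy: it lives on
`𝒬 = ℝ^{2N} ∖ (Ωᶜ × Ωᶜ)` and has the superposed kernel as density. -/
noncomputable def interactionMeasure (p : ℝ) (μ : Measure ℝ) :
    Measure (EuclideanSpace ℝ (Fin N) × EuclideanSpace ℝ (Fin N)) :=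
  ((volume.prod volume).restrict (Ωᶜ ×ˢ Ωᶜ)ᶜ).withDensity (superposedKernel N p μ)

variable {N} {p : ℝ} {μ : Measure ℝ} {g v : EuclideanSpace ℝ (Fin N) → ℝ}

theorem localMeasure_absolutelyContinuous : localMeasure N Ω g ≪ volume :=
  Measure.AbsolutelyContinuous.add_left_iff.2 ⟨Measure.restrict_le_self.absolutelyContinuous,
    (withDensity_absolutelyContinuous _ _).trans Measure.restrict_le_self.absolutelyContinuous⟩

theorem restrict_absolutelyContinuous_localMeasure : volume.restrict Ω ≪ localMeasure N Ω g :=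
  Measure.AbsolutelyContinuous.rfl.add_right _

theorem interactionMeasure_absolutelyContinuous :
    interactionMeasure N Ω p μ ≪ volume.prod volume :=
  (withDensity_absolutelyContinuous _ _).trans Measure.restrict_le_self.absolutelyContinuous

theorem restrict_prod_absolutelyContinuous_interactionMeasure [SFinite μ] (hN : 1 ≤ N)
    (hp : 1 ≤ p) (hμ : μ (Ioo 0 1) ≠ 0) :
    (volume.restrict Ω).prod volume ≪ interactionMeasure N Ω p μ := by
  have : NeZero N := ⟨by lia⟩
  have hΩQ : Ω ×ˢ univ ⊆ (Ωᶜ ×ˢ Ωᶜ)ᶜ := fun z hz hz' => hz'.1 hz.1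
  have hker : ∀ᵐ z ∂(volume.prod volume).restrict (Ωᶜ ×ˢ Ωᶜ)ᶜ, superposedKernel N p μ z ≠ 0 :=
    (ae_restrict_of_ae (ae_prod_fst_ne_snd volume volume)).mono fun z hz =>
      superposedKernel_ne_zero hN hp hμ hz
  rw [Measure.restrict_prod_eq_prod_univ]
  exact (Measure.restrict_mono hΩQ le_rfl).absolutelyContinuous.trans
    (withDensity_absolutelyContinuous' (measurable_superposedKernel N p μ).aemeasurable hker)

theorem ofReal_abs_rpow (hp : 0 ≤ p) (a : ℝ) : ENNReal.ofReal (|a| ^ p) = ‖a‖ₑ ^ p := by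
  rw [← ENNReal.ofReal_rpow_of_nonneg (abs_nonneg a) hp, Real.enorm_eq_ofReal_abs]

theorem lintegral_localMeasure (hp : 0 ≤ p) (hg : Measurable g) (hv : Measurable v) :
    ∫⁻ x, ‖v x‖ₑ ^ p ∂localMeasure N Ω g =
      (∫⁻ x in Ω, ENNReal.ofReal (|v x| ^ p)) +
        ∫⁻ x in Ωᶜ, ENNReal.ofReal (|g x| * |v x| ^ p) := by
  rw [localMeasure, lintegral_add_measure,
    lintegral_withDensity_eq_lintegral_mul _ hg.enorm (hv.enorm.pow_const p)]
  simp only [ENNReal.ofReal_mul (abs_nonneg _), ofReal_abs_rpow hp, Real.enorm_eq_ofReal_abs,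
    Pi.mul_apply]

theorem lintegral_interactionMeasure [SFinite μ] (hp : 0 ≤ p) (hv : Measurable v) :
    ∫⁻ z, ‖increment v z‖ₑ ^ p ∂interactionMeasure N Ω p μ =
      (1 / 2) * ∫⁻ s in Ioo (0 : ℝ) 1, ENNReal.ofReal (cNsp N s p) *
        ∫⁻ z in (Ωᶜ ×ˢ Ωᶜ)ᶜ,
          ENNReal.ofReal (|v z.1 - v z.2| ^ p / dist z.1 z.2 ^ ((N : ℝ) + p * s))
          ∂(volume.prod volume) ∂μ := by
  have hk := measurable_gagliardoKernel N p
  have hincr : Measurable fun z => ‖increment v z‖ₑ ^ p := by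
    unfold increment
    fun_prop
  have hintegrand (s : ℝ) (z : EuclideanSpace ℝ (Fin N) × EuclideanSpace ℝ (Fin N)) :
      ENNReal.ofReal (cNsp N s p) *
          ENNReal.ofReal (|v z.1 - v z.2| ^ p / dist z.1 z.2 ^ ((N : ℝ) + p * s)) =
        gagliardoKernel N p (s, z) * ‖increment v z‖ₑ ^ p := by
    rw [div_eq_mul_inv, ENNReal.ofReal_mul (by positivity), ofReal_abs_rpow hp, gagliardoKernel,
      increment]
    ring
  have hker (z : EuclideanSpace ℝ (Fin N) × EuclideanSpace ℝ (Fin N)) :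
      superposedKernel N p μ z * ‖increment v z‖ₑ ^ p =
        (1 / 2) * ∫⁻ s in Ioo 0 1, gagliardoKernel N p (s, z) * ‖increment v z‖ₑ ^ p ∂μ := by
    rw [superposedKernel, mul_assoc, lintegral_mul_const _ (by fun_prop)]
  rw [interactionMeasure, lintegral_withDensity_eq_lintegral_mul _
    (measurable_superposedKernel N p μ) hincr]
  simp only [Pi.mul_apply, hker, ← lintegral_const_mul' _ _ ENNReal.ofReal_ne_top, hintegrand]
  rw [lintegral_const_mul' _ _ (by norm_num), lintegral_lintegral_swap]
  exact ((hk.comp measurable_swap).mul (hincr.comp measurable_fst)).aemeasurable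

theorem energyE_eq_nonlocalEnergy [SFinite μ] (p : ℝ≥0) (hg : Measurable g) (hv : Measurable v) :
    energyE N Ω p μ g v =
      nonlocalEnergy p (localMeasure N Ω g) (interactionMeasure N Ω p μ) v := by
  rw [nonlocalEnergy, lintegral_localMeasure Ω p.coe_nonneg hg hv,
    lintegral_interactionMeasure Ω p.coe_nonneg hv,
    energyE]

end EnergyMeasures

theorem tendsto_zero_of_forall_le_ofReal {f : ℕ × ℕ → ℝ≥0∞}
    (h : ∀ ε : ℝ, 0 < ε → ∃ K : ℕ, ∀ m, K ≤ m → ∀ n, K ≤ n → f (m, n) ≤ ENNReal.ofReal ε) :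
    Tendsto f atTop (𝓝 0) := by
  refine ENNReal.tendsto_nhds_zero.2 fun ε hε => eventually_atTop_prod_self.2 ?_
  obtain ⟨δ, hδ, hδε⟩ := ENNReal.lt_iff_exists_nnreal_btwn.1 hε
  obtain ⟨K, hK⟩ := h δ (by exact_mod_cast hδ)
  refine ⟨K, fun m n hm hn => (hK m hm n hn).trans ?_⟩
  rw [ENNReal.ofReal_coe_nnreal]
  exact hδε.le

theorem statement5_general (N : ℕ) (hN : 1 ≤ N)
    (Ω : Set (EuclideanSpace ℝ (Fin N))) (hΩ : volume Ω ≠ 0)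
    (p : ℝ) (hp : 1 ≤ p)
    (μ : Measure ℝ) [SFinite μ] (hμ : μ (Ioo 0 1) ≠ 0)
    (g : EuclideanSpace ℝ (Fin N) → ℝ) (hg : Measurable g)
    (u : ℕ → EuclideanSpace ℝ (Fin N) → ℝ) (hu : ∀ n, Measurable (u n))
    (hfin : ∀ n, energyE N Ω p μ g (u n) < ⊤)
    (hcauchy : ∀ ε : ℝ, 0 < ε → ∃ K : ℕ, ∀ m, K ≤ m → ∀ n, K ≤ n →
      energyE N Ω p μ g (fun x => u m x - u n x) ≤ ENNReal.ofReal ε) :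
    ∃ v : EuclideanSpace ℝ (Fin N) → ℝ, Measurable v ∧
      energyE N Ω p μ g v < ⊤ ∧
      Tendsto (fun n => energyE N Ω p μ g (fun x => u n x - v x)) atTop (𝓝 0) := by
  lift p to ℝ≥0 using zero_le_one.trans hp
  have : NeZero (volume.restrict Ω) := ⟨mt Measure.restrict_eq_zero.1 hΩ⟩
  have hE {w : EuclideanSpace ℝ (Fin N) → ℝ} (hw : Measurable w) :=
    energyE_eq_nonlocalEnergy Ω (μ := μ) p hg hw
  have hE_sub {w w' : EuclideanSpace ℝ (Fin N) → ℝ} (hw : Measurable w) (hw' : Measurable w') :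
      energyE N Ω p μ g (fun x => w x - w' x) = nonlocalEnergy p _ _ (w - w') := hE (hw.sub hw')
  simp only [hE (hu _)] at hfin
  simp only [hE_sub (hu _) (hu _)] at hcauchy
  obtain ⟨v, hv, hvfin, hlim⟩ := exists_tendsto_nonlocalEnergy_sub (by exact_mod_cast hp)
    (localMeasure_absolutelyContinuous Ω) (interactionMeasure_absolutelyContinuous Ω)
    (restrict_absolutelyContinuous_localMeasure Ω)
    (restrict_prod_absolutelyContinuous_interactionMeasure Ω hN hp hμ)
    (fun n => (hu n).aestronglyMeasurable) hfin (tendsto_zero_of_forall_le_ofReal hcauchy)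
  refine ⟨v, hv.measurable, (hE hv.measurable).trans_lt hvfin, hlim.congr fun n => ?_⟩
  exact (hE_sub (hu n) hv.measurable).symm

theorem statement5 (N : ℕ) (hN : 1 ≤ N)
    (Ω : Set (EuclideanSpace ℝ (Fin N))) (hΩ : IsOpen Ω) (hne : Ω.Nonempty)
    (hbd : Bornology.IsBounded Ω)
    (p : ℝ) (hp : 1 < p)
    (μ : Measure ℝ) [IsFiniteMeasure μ] (hμ : μ ≠ 0)
    (hsupp : μ ((Set.Ioo (0 : ℝ) 1)ᶜ) = 0)
    (g : EuclideanSpace ℝ (Fin N) → ℝ) (hg : Measurable g)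
    (u : ℕ → EuclideanSpace ℝ (Fin N) → ℝ) (hu : ∀ n, Measurable (u n))
    (hfin : ∀ n, energyE N Ω p μ g (u n) < ⊤)
    (hcauchy : ∀ ε : ℝ, 0 < ε → ∃ K : ℕ, ∀ m, K ≤ m → ∀ n, K ≤ n →
      energyE N Ω p μ g (fun x => u m x - u n x) ≤ ENNReal.ofReal ε) :
    ∃ v : EuclideanSpace ℝ (Fin N) → ℝ, Measurable v ∧
      energyE N Ω p μ g v < ⊤ ∧
      Tendsto (fun n => energyE N Ω p μ g (fun x => u n x - v x)) atTop (𝓝 0) :=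
  statement5_general N hN Ω (hΩ.measure_pos volume hne).ne' p hp.le μ
    (measure_of_measure_compl_eq_zero hsupp ▸ mt Measure.measure_univ_eq_zero.1 hμ)
    g hg u hu hfin hcauchy
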